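/- The function d_F is a metric on ℝ³: it is nonnegative, symmetric, satisfies the triangle inequality, and d_F(P,Q) = 0 if and only if P = Q (in particular d_F(P,Q) > 0 when P ≠ Q both project to the same well p₋ or p₊). Moreover it is a length metric: for all P, Q ∈ ℝ³, d_F(P,Q) = inf{ L(Γ) : Γ : [a,b] → ℝ³ admissible, locally Lipschitz, Γ(a) = P, Γ(b) = Q }. -/

import Mathlib

open MeasureTheory Set Filter Topology
open scoped ENNReal

noncomputable section

/-- The Euclidean norm of a vector in `ℝ × ℝ`. -/
def enorm2 (v : ℝ × ℝ) : ℝ := Real.sqrt (v.1 ^ 2 + v.2 ^ 2)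

/-- The degenerate length `E(γ) = ∫ₐᵇ F(γ(t)) |γ'(t)| dt` of a planar curve. -/
def degLen (F : ℝ × ℝ → ℝ) (a b : ℝ) (γ : ℝ → ℝ × ℝ) : ℝ :=
  ∫ t in a..b, F (γ t) * enorm2 (deriv γ t)

/-- The signed area `𝒜(γ) = ∫ₐᵇ γ¹(t) (γ²)'(t) dt` of a planar curve. -/
def sArea (a b : ℝ) (γ : ℝ → ℝ × ℝ) : ℝ :=
  ∫ t in a..b, (γ t).1 * deriv (fun s => (γ s).2) t

/-- A locally Lipschitz curve on `[a,b]` joining `p` to `q`. -/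
def IsCurve (a b : ℝ) (γ : ℝ → ℝ × ℝ) (p q : ℝ × ℝ) : Prop :=
  a ≤ b ∧ LocallyLipschitz γ ∧ γ a = p ∧ γ b = q

/-- The standing hypotheses on the potential `W`: smooth, nonnegative, vanishing exactly at the
two distinct wells `pm` and `pp`, with positive definite Hessians there, and bounded away from
zero near infinity (`liminf_{|p|→∞} W(p) > 0`). -/
structure TwoWell (W : ℝ × ℝ → ℝ) (pm pp : ℝ × ℝ) : Prop where
  smooth : ContDiff ℝ (⊤ : ℕ∞) W
  nonneg : ∀ p, 0 ≤ W p
  wells_ne : pm ≠ pp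
  zeroSet : ∀ p, W p = 0 ↔ p = pm ∨ p = pp
  hess_m : ∀ v : ℝ × ℝ, v ≠ 0 → 0 < iteratedFDeriv ℝ 2 W pm ![v, v]
  hess_p : ∀ v : ℝ × ℝ, v ≠ 0 → 0 < iteratedFDeriv ℝ 2 W pp ![v, v]
  coercive : ∃ c > 0, ∃ R : ℝ, ∀ p : ℝ × ℝ, R ≤ ‖p‖ → c ≤ W p

/-- The singular Carnot–Carathéodory distance on `ℝ³` induced by the conformal factor `F`:
the infimum of degenerate lengths of locally Lipschitz planar curves joining the planar
projections of `P` and `Q` whose signed area equals the difference of third coordinates. -/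
def dCC (F : ℝ × ℝ → ℝ) (P Q : ℝ × ℝ × ℝ) : ℝ :=
  sInf { x | ∃ a b γ, IsCurve a b γ (P.1, P.2.1) (Q.1, Q.2.1) ∧
      sArea a b γ = Q.2.2 - P.2.2 ∧ degLen F a b γ = x }

/-- The length of a curve in `ℝ³` with respect to the metric `dCC F`: the supremum over
finite partitions of the sums of distances of consecutive sample points. -/
def pathLen (F : ℝ × ℝ → ℝ) (a b : ℝ) (Γ : ℝ → ℝ × ℝ × ℝ) : ℝ :=
  sSup { x | ∃ (n : ℕ) (t : Fin (n + 1) → ℝ), Monotone t ∧ t 0 = a ∧ t (Fin.last n) = b ∧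
      x = ∑ i : Fin n, dCC F (Γ (t i.castSucc)) (Γ (t i.succ)) }

/-- A curve `Γ = (Γ¹,Γ²,Γ³) : ℝ → ℝ³` is admissible on `[a,b]` if
`(Γ³)'(t) = Γ¹(t) (Γ²)'(t)` for a.e. `t ∈ (a,b)`. -/
def Admissible (a b : ℝ) (Γ : ℝ → ℝ × ℝ × ℝ) : Prop :=
  ∀ᵐ t : ℝ ∂volume, t ∈ Set.Ioo a b →
    deriv (fun s => (Γ s).2.2) t = (Γ t).1 * deriv (fun s => (Γ s).2.1) t

/-- The planar projection `Π(Γ) = (Γ¹,Γ²)` of a curve in `ℝ³`. -/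
def projCurve (Γ : ℝ → ℝ × ℝ × ℝ) : ℝ → ℝ × ℝ := fun t => ((Γ t).1, (Γ t).2.1)

/-!
A curve in `ℝ³` satisfying the admissibility condition is determined by its planar projection and
its initial height, and its height gains exactly the signed area swept by the projection. Hence
concatenating, reversing and lifting planar curves gives all the metric and length properties for
any continuous conformal factor `F ≥ 0`; only the separation of points is quantitative.

For that, suppose `‖x - p‖ = O(F x)` at every point `p`; at a well this is the nondegeneracy of the
Hessian. A bump function `f` around `p` has a Lipschitz derivative vanishing at `p`, so
`‖fderiv f‖ ≤ K F` everywhere, and a curve leaving a fixed neighbourhood of `p` has length at least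
`1 / K`. A loop that stays near `p` sweeps the area `∮ (x₁ - p₁) dx₂ ≤ C ∮ F |dx|`, which bounds its
length below by its area.
-/

open Asymptotics

section LocallyLipschitzCurve

variable {E : Type*} [NormedAddCommGroup E] {γ : ℝ → E}

lemma locallyLipschitz_piecewise_Iic {η : ℝ → E} {b : ℝ} (hγ : LocallyLipschitz γ)
    (hη : LocallyLipschitz η) (hb : γ b = η b) : LocallyLipschitz ((Iic b).piecewise γ η) := by
  have piecewise_eq :
      (Iic b).piecewise γ η = (fun t ↦ γ (min t b)) + (fun t ↦ η (max t b)) - fun _ ↦ γ b := by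
    ext t
    rcases le_or_gt t b with ht | ht
    · simp [ht, hb]
    · simp [ht, ht.le]
  rw [piecewise_eq]
  exact ((hγ.comp (LocallyLipschitz.id.min_const b)).add
    (hη.comp (LocallyLipschitz.id.max_const b))).sub (LocallyLipschitz.const _)

variable [NormedSpace ℝ E]

lemma ae_differentiableAt_of_locallyLipschitz [FiniteDimensional ℝ E] (hγ : LocallyLipschitz γ) :
    ∀ᵐ t : ℝ, DifferentiableAt ℝ γ t := by
  have ae_within (n : ℕ) : ∀ᵐ t : ℝ, t ∈ Icc (-n : ℝ) n →
      DifferentiableWithinAt ℝ γ (Icc (-n : ℝ) n) t := by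
    obtain ⟨K, hK⟩ := hγ.locallyLipschitzOn.exists_lipschitzOnWith_of_compact
      (isCompact_Icc (a := (-n : ℝ)) (b := n))
    exact hK.ae_differentiableWithinAt_of_mem_real
  filter_upwards [ae_all_iff.2 ae_within] with t ht
  obtain ⟨n, hn⟩ := exists_nat_gt |t|
  obtain ⟨hlo, hhi⟩ := abs_lt.1 hn
  exact (ht n ⟨hlo.le, hhi.le⟩).differentiableAt (Icc_mem_nhds hlo hhi)

lemma exists_norm_deriv_le_of_locallyLipschitz (hγ : LocallyLipschitz γ) {s : Set ℝ}
    (hs : IsCompact s) : ∃ C, ∀ t ∈ s, ‖deriv γ t‖ ≤ C := by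
  obtain ⟨T, hT, hsT⟩ := exists_compact_superset hs
  obtain ⟨K, hK⟩ := hγ.locallyLipschitzOn.exists_lipschitzOnWith_of_compact hT
  exact ⟨K, fun t ht ↦
    norm_deriv_le_of_lipschitzOn (mem_interior_iff_mem_nhds.1 (hsT ht)) hK⟩

lemma integral_deriv_eq_sub_of_locallyLipschitz {f : ℝ → ℝ} (hf : LocallyLipschitz f) (a b : ℝ) :
    ∫ t in a..b, deriv f t = f b - f a := by
  obtain ⟨K, hK⟩ := hf.locallyLipschitzOn.exists_lipschitzOnWith_of_compact
    (isCompact_uIcc (a := a) (b := b))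
  exact hK.absolutelyContinuousOnInterval.integral_deriv_eq_sub

end LocallyLipschitzCurve

section Action

variable {E : Type*} [NormedAddCommGroup E] [NormedSpace ℝ E]
  {L M : E → E → ℝ} {γ η : ℝ → E} {a b c : ℝ}

/-- The action `∫ₐᵇ L(γ(t), γ'(t)) dt` of a curve for a Lagrangian `L`. Degenerate length and signed
area are both actions, so the behaviour of actions under operations on curves serves both. -/
def action (L : E → E → ℝ) (a b : ℝ) (γ : ℝ → E) : ℝ := ∫ t in a..b, L (γ t) (deriv γ t)

lemma action_comp_add_const (L : E → E → ℝ) (a b h : ℝ) (γ : ℝ → E) :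
    action L a b (fun t ↦ γ (t + h)) = action L (a + h) (b + h) γ := by
  simp only [action, deriv_comp_add_const]
  exact intervalIntegral.integral_comp_add_right (fun t ↦ L (γ t) (deriv γ t)) h

lemma action_comp_neg (L : E → E → ℝ) (a b : ℝ) (γ : ℝ → E) :
    action L (-b) (-a) (fun t ↦ γ (-t)) = action (fun x v ↦ L x (-v)) a b γ := by
  simp only [action, deriv_comp_neg]
  rw [← intervalIntegral.integral_comp_neg]
  simp only [neg_neg]

lemma action_congr (hab : a ≤ b) (h : EqOn γ η (Ioo a b)) : action L a b γ = action L a b η := by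
  refine intervalIntegral.integral_congr_Ioo_of_le hab fun t ht ↦ ?_
  have eventuallyEq : γ =ᶠ[𝓝 t] η := h.eventuallyEq_of_mem (Ioo_mem_nhds ht.1 ht.2)
  simp only [h ht, eventuallyEq.deriv_eq]

variable [FiniteDimensional ℝ E]

lemma exists_norm_lagrangian_le (hL : Continuous (Function.uncurry L)) (hγ : LocallyLipschitz γ)
    {s : Set ℝ} (hs : IsCompact s) : ∃ C, ∀ t ∈ s, ‖L (γ t) (deriv γ t)‖ ≤ C := by
  obtain ⟨R, hR⟩ := exists_norm_deriv_le_of_locallyLipschitz hγ hs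
  have : ProperSpace E := FiniteDimensional.proper ℝ E
  obtain ⟨C, hC⟩ := ((hs.image hγ.continuous).prod
    (isCompact_closedBall (0 : E) R)).exists_bound_of_continuousOn hL.continuousOn
  exact ⟨C, fun t ht ↦ hC (γ t, deriv γ t) ⟨mem_image_of_mem γ ht, by simpa using hR t ht⟩⟩

lemma intervalIntegrable_lagrangian (hL : Continuous (Function.uncurry L))
    (hγ : LocallyLipschitz γ) (a b : ℝ) :
    IntervalIntegrable (fun t ↦ L (γ t) (deriv γ t)) volume a b := by
  obtain ⟨C, hC⟩ := exists_norm_lagrangian_le hL hγ (isCompact_uIcc (a := a) (b := b))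
  have stronglyMeasurable : StronglyMeasurable fun t ↦ L (γ t) (deriv γ t) :=
    hL.comp_stronglyMeasurable
      (hγ.continuous.stronglyMeasurable.prodMk (stronglyMeasurable_deriv γ))
  rw [intervalIntegrable_iff]
  refine Measure.integrableOn_of_bounded (M := C) (by simp)
    stronglyMeasurable.aestronglyMeasurable ?_
  filter_upwards [ae_restrict_mem measurableSet_uIoc] with t ht
  exact hC t (uIoc_subset_uIcc ht)

lemma action_add_adjacent (hL : Continuous (Function.uncurry L)) (hγ : LocallyLipschitz γ)
    (a b c : ℝ) : action L a b γ + action L b c γ = action L a c γ :=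
  intervalIntegral.integral_add_adjacent_intervals
    (intervalIntegrable_lagrangian hL hγ a b) (intervalIntegrable_lagrangian hL hγ b c)

lemma action_sub (hL : Continuous (Function.uncurry L)) (hM : Continuous (Function.uncurry M))
    (hγ : LocallyLipschitz γ) (a b : ℝ) :
    action (fun x v ↦ L x v - M x v) a b γ = action L a b γ - action M a b γ :=
  intervalIntegral.integral_sub
    (intervalIntegrable_lagrangian hL hγ a b) (intervalIntegrable_lagrangian hM hγ a b)

lemma abs_action_le_mul (hM : Continuous (Function.uncurry M)) (hγ : LocallyLipschitz γ)
    (hab : a ≤ b) {C : ℝ} (hLM : ∀ t ∈ Icc a b, ∀ v, |L (γ t) v| ≤ C * M (γ t) v) :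
    |action L a b γ| ≤ C * action M a b γ := by
  rw [← Real.norm_eq_abs, action, action, ← intervalIntegral.integral_const_mul]
  exact intervalIntegral.norm_integral_le_of_norm_le hab
    (.of_forall fun t ht ↦ hLM t (Ioc_subset_Icc_self ht) _)
    ((intervalIntegrable_lagrangian hM hγ a b).const_mul C)

lemma locallyLipschitz_action (hL : Continuous (Function.uncurry L)) (hγ : LocallyLipschitz γ)
    (a : ℝ) : LocallyLipschitz fun t ↦ action L a t γ := by
  intro x
  obtain ⟨C, hC⟩ :=
    exists_norm_lagrangian_le hL hγ (isCompact_Icc (a := x - 1) (b := x + 1))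
  refine ⟨C.toNNReal, Icc (x - 1) (x + 1), Icc_mem_nhds (by simp) (by simp),
    LipschitzOnWith.of_dist_le_mul fun s hs t ht ↦ ?_⟩
  have action_sub_action : action L a s γ - action L a t γ = action L t s γ := by
    rw [← action_add_adjacent hL hγ a t s, add_sub_cancel_left]
  rw [Real.dist_eq, Real.dist_eq, action_sub_action, ← Real.norm_eq_abs]
  refine intervalIntegral.norm_integral_le_of_norm_le_const fun u hu ↦ ?_
  exact (hC u (ordConnected_Icc.uIcc_subset ht hs (uIoc_subset_uIcc hu))).trans
    (Real.le_coe_toNNReal C)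

lemma action_piecewise_Iic (hL : Continuous (Function.uncurry L)) (hγ : LocallyLipschitz γ)
    (hη : LocallyLipschitz η) (hb : γ b = η b) (hab : a ≤ b) (hbc : b ≤ c) :
    action L a c ((Iic b).piecewise γ η) = action L a b γ + action L b c η := by
  have eqOn_left : EqOn ((Iic b).piecewise γ η) γ (Ioo a b) := fun t ht ↦
    piecewise_eq_of_mem _ _ _ ht.2.le
  have eqOn_right : EqOn ((Iic b).piecewise γ η) η (Ioo b c) := fun t ht ↦
    piecewise_eq_of_notMem _ _ _ (not_le.2 ht.1)
  rw [← action_add_adjacent hL (locallyLipschitz_piecewise_Iic hγ hη hb) a b c,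
    action_congr hab eqOn_left, action_congr hbc eqOn_right]

lemma action_fderiv {f : E → ℝ} (hf : ContDiff ℝ 1 f) (hγ : LocallyLipschitz γ) (a b : ℝ) :
    action (fun x v ↦ fderiv ℝ f x v) a b γ = f (γ b) - f (γ a) := by
  have ftc : ∫ t in a..b, deriv (f ∘ γ) t = f (γ b) - f (γ a) :=
    integral_deriv_eq_sub_of_locallyLipschitz (hf.locallyLipschitz.comp hγ) a b
  rw [← ftc]
  refine intervalIntegral.integral_congr_ae ?_
  filter_upwards [ae_differentiableAt_of_locallyLipschitz hγ] with t ht _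
  exact ((hf.differentiable one_ne_zero (γ t)).hasFDerivAt.comp_hasDerivAt t
    ht.hasDerivAt).deriv.symm

end Action

section Growth

variable {E : Type*} [NormedAddCommGroup E] [NormedSpace ℝ E]

lemma taylor_two_isLittleO {G : Type*} [NormedAddCommGroup G] [NormedSpace ℝ G] {f : E → G}
    (hf : ContDiff ℝ 2 f) (p : E) :
    (fun x ↦ f x - f p - fderiv ℝ f p (x - p) -
      (2⁻¹ : ℝ) • fderiv ℝ (fderiv ℝ f) p (x - p) (x - p)) =o[𝓝 p] fun x ↦ ‖x - p‖ ^ 2 := by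
  set D := fderiv ℝ (fderiv ℝ f) p
  have symm (v w : E) : D v w = D w v := hf.contDiffAt.isSymmSndFDerivAt (by simp) v w
  have hasFDerivAt_remainder (x : E) :
      HasFDerivAt (fun x ↦ f x - fderiv ℝ f p (x - p) - (2⁻¹ : ℝ) • D (x - p) (x - p))
        (fderiv ℝ f x - fderiv ℝ f p - D (x - p)) x := by
    have sub_const := (hasFDerivAt_id (𝕜 := ℝ) x).sub_const p
    have quadratic := ((D.hasFDerivAt.comp x sub_const).clm_apply sub_const).const_smul (2⁻¹ : ℝ)
    refine (((hf.differentiable two_ne_zero x).hasFDerivAt.sub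
      ((fderiv ℝ f p).hasFDerivAt.comp x sub_const)).sub quadratic).congr_fderiv ?_
    ext v
    simp only [symm v, map_sub, add_apply, sub_apply, smul_apply, ContinuousLinearMap.comp_apply,
      ContinuousLinearMap.flip_apply, ContinuousLinearMap.id_apply, Function.comp_apply,
      id_eq]
    module
  have fderiv_isLittleO :
      (fun x ↦ fderiv ℝ f x - fderiv ℝ f p - D (x - p)) =o[𝓝[univ] p] fun x ↦ ‖x - p‖ ^ 1 := by
    simpa using ((hf.fderiv_right (m := 1) (by norm_num)).differentiable one_ne_zero
      p).hasFDerivAt.isLittleO.norm_right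
  simpa [nhdsWithin_univ, sub_right_comm] using convex_univ.isLittleO_pow_succ (mem_univ p)
    (fun x _ ↦ (hasFDerivAt_remainder x).hasFDerivWithinAt) fderiv_isLittleO

variable [FiniteDimensional ℝ E]

lemma isCoercive_of_pos {B : E →L[ℝ] E →L[ℝ] ℝ} (hB : ∀ v, v ≠ 0 → 0 < B v v) :
    IsCoercive B := by
  rcases subsingleton_or_nontrivial E with _ | _
  · exact ⟨1, one_pos, fun v ↦ by simp [Subsingleton.elim v 0]⟩
  have : ProperSpace E := FiniteDimensional.proper ℝ E
  obtain ⟨u, hu, hmin⟩ := (isCompact_sphere (0 : E) 1).exists_isMinOn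
    (NormedSpace.sphere_nonempty.2 zero_le_one)
    (B.continuous.clm_apply continuous_id).continuousOn
  refine ⟨B u u, hB u (ne_zero_of_mem_unit_sphere ⟨u, hu⟩), fun v ↦ ?_⟩
  rcases eq_or_ne v 0 with rfl | hv
  · simp
  have hnorm : ‖v‖ ≠ 0 := norm_ne_zero_iff.2 hv
  have le_normalized : B u u ≤ B (‖v‖⁻¹ • v) (‖v‖⁻¹ • v) :=
    hmin (by simp [norm_smul, hnorm] : ‖v‖⁻¹ • v ∈ Metric.sphere (0 : E) 1)
  calc B u u * ‖v‖ * ‖v‖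
      ≤ B (‖v‖⁻¹ • v) (‖v‖⁻¹ • v) * ‖v‖ * ‖v‖ := by gcongr
    _ = B v v := by
      simp only [map_smul, smul_apply, smul_eq_mul]
      field_simp

lemma sq_norm_isBigO_of_hessian_pos {f : E → ℝ} {p : E} (hf : ContDiff ℝ 2 f)
    (hp : fderiv ℝ f p = 0) (hess : ∀ v, v ≠ 0 → 0 < iteratedFDeriv ℝ 2 f p ![v, v]) :
    (fun x ↦ ‖x - p‖ ^ 2) =O[𝓝 p] fun x ↦ f x - f p := by
  obtain ⟨c, hc, coercive⟩ : IsCoercive (fderiv ℝ (fderiv ℝ f) p) :=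
    isCoercive_of_pos fun v hv ↦ by simpa [iteratedFDeriv_two_apply] using hess v hv
  refine IsBigO.of_bound (4 / c) ?_
  filter_upwards [(taylor_two_isLittleO hf p).def (by positivity : 0 < c / 4)] with x hx
  have remainder_le := (abs_le.1 hx).1
  simp only [hp, zero_apply, sub_zero, norm_pow, norm_norm, smul_eq_mul] at remainder_le ⊢
  have quarter_le : c / 4 * ‖x - p‖ ^ 2 ≤ f x - f p := by linarith [coercive (x - p)]
  calc ‖x - p‖ ^ 2 = 4 / c * (c / 4 * ‖x - p‖ ^ 2) := by field_simp
    _ ≤ 4 / c * ‖f x - f p‖ := by gcongr; exact quarter_le.trans (le_abs_self _)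

lemma exists_bump_norm_fderiv_le {F : E → ℝ} (hF0 : ∀ x, 0 ≤ F x) {p : E}
    (hp : (fun x ↦ x - p) =O[𝓝 p] F) {U : Set E} (hU : U ∈ 𝓝 p) :
    ∃ f : E → ℝ, ∃ K > 0, ContDiff ℝ 1 f ∧ f p = 1 ∧ (∀ x ∉ U, f x = 0) ∧
      ∀ x, ‖fderiv ℝ f x‖ ≤ K * F x := by
  obtain ⟨C, hC, hpC⟩ := hp.exists_pos
  obtain ⟨ρ, hρ, hball⟩ := Metric.nhds_basis_closedBall.mem_iff.1 (inter_mem hU hpC.bound)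
  let f : ContDiffBump p := ⟨ρ / 2, ρ, half_pos hρ, half_lt_self hρ⟩
  obtain ⟨K, hK⟩ := ContDiff.lipschitzWith_of_hasCompactSupport
    (f.hasCompactSupport.fderiv (𝕜 := ℝ)) (f.contDiff.fderiv_right (m := 1) (n := 2) (by norm_num))
    one_ne_zero
  have fderiv_center : fderiv ℝ f p = 0 := by simp [f.eventuallyEq_one.fderiv_eq]
  refine ⟨f, (K + 1) * C, by positivity, f.contDiff, f.eventuallyEq_one.eq_of_nhds,
    fun x hx ↦ ?_, fun x ↦ ?_⟩
  · exact f.zero_of_le_dist (not_lt.1 fun h ↦ hx (hball h.le).1)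
  by_cases hx : x ∈ Metric.closedBall p ρ
  · calc ‖fderiv ℝ f x‖ ≤ K * ‖x - p‖ := by
          simpa [fderiv_center] using hK.norm_sub_le x p
      _ ≤ (K + 1) * (C * F x) := by
          gcongr
          · simp
          · simpa [abs_of_nonneg (hF0 x)] using (hball hx).2
      _ = (K + 1) * C * F x := by ring
  · have fderiv_eq_zero : fderiv ℝ f x = 0 := image_eq_zero_of_notMem_tsupport fun h ↦
      hx (f.tsupport_eq ▸ tsupport_fderiv_subset ℝ h)
    rw [fderiv_eq_zero, norm_zero]
    exact mul_nonneg (by positivity) (hF0 x)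

end Growth


section PlanarCurve

lemma enorm2_nonneg (v : ℝ × ℝ) : 0 ≤ enorm2 v := Real.sqrt_nonneg _

lemma continuous_enorm2 : Continuous enorm2 := by unfold enorm2; fun_prop

lemma enorm2_neg (v : ℝ × ℝ) : enorm2 (-v) = enorm2 v := by simp [enorm2]

lemma norm_le_enorm2 (v : ℝ × ℝ) : ‖v‖ ≤ enorm2 v :=
  max_le (Real.abs_le_sqrt (by linarith [sq_nonneg v.2]))
    (Real.abs_le_sqrt (by linarith [sq_nonneg v.1]))

/-- The Lagrangian `F(x) |v|`, whose action is the degenerate length. -/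
def lengthLagrangian (F : ℝ × ℝ → ℝ) (x v : ℝ × ℝ) : ℝ := F x * enorm2 v

/-- The one-form `x₁ dx₂` as a Lagrangian; its action on locally Lipschitz curves is the signed
area. -/
def areaLagrangian (x v : ℝ × ℝ) : ℝ := x.1 * v.2

variable {F : ℝ × ℝ → ℝ} {γ : ℝ → ℝ × ℝ} {a b : ℝ}

lemma continuous_lengthLagrangian (hF : Continuous F) :
    Continuous (Function.uncurry (lengthLagrangian F)) :=
  (hF.comp continuous_fst).mul (continuous_enorm2.comp continuous_snd)

lemma continuous_areaLagrangian : Continuous (Function.uncurry areaLagrangian) := by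
  unfold areaLagrangian Function.uncurry
  fun_prop

lemma degLen_eq_action (F : ℝ × ℝ → ℝ) (a b : ℝ) (γ : ℝ → ℝ × ℝ) :
    degLen F a b γ = action (lengthLagrangian F) a b γ := rfl

lemma ae_deriv_snd (hγ : LocallyLipschitz γ) :
    ∀ᵐ t, deriv (fun s ↦ (γ s).2) t = (deriv γ t).2 := by
  filter_upwards [ae_differentiableAt_of_locallyLipschitz hγ] with t ht
  exact (hasFDerivAt_snd (𝕜 := ℝ) (p := γ t)).comp_hasDerivAt t ht.hasDerivAt |>.deriv

lemma sArea_eq_action (hγ : LocallyLipschitz γ) (a b : ℝ) :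
    sArea a b γ = action areaLagrangian a b γ := by
  refine intervalIntegral.integral_congr_ae ?_
  filter_upwards [ae_deriv_snd hγ] with t ht _
  rw [ht, areaLagrangian]

lemma degLen_nonneg (hF0 : ∀ x, 0 ≤ F x) (hab : a ≤ b) (γ : ℝ → ℝ × ℝ) : 0 ≤ degLen F a b γ :=
  intervalIntegral.integral_nonneg hab fun _ _ ↦ mul_nonneg (hF0 _) (enorm2_nonneg _)

lemma degLen_add_adjacent (hF : Continuous F) (hγ : LocallyLipschitz γ) (a b c : ℝ) :
    degLen F a b γ + degLen F b c γ = degLen F a c γ :=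
  action_add_adjacent (continuous_lengthLagrangian hF) hγ a b c

lemma degLen_comp_neg (F : ℝ × ℝ → ℝ) (a b : ℝ) (γ : ℝ → ℝ × ℝ) :
    degLen F (-b) (-a) (fun t ↦ γ (-t)) = degLen F a b γ := by
  simp only [degLen_eq_action, action_comp_neg, lengthLagrangian, enorm2_neg]
  rfl

lemma sArea_comp_neg (hγ : LocallyLipschitz γ) (a b : ℝ) :
    sArea (-b) (-a) (fun t ↦ γ (-t)) = -sArea a b γ := by
  have reversed : LocallyLipschitz fun t ↦ γ (-t) := hγ.comp LipschitzWith.id.neg.locallyLipschitz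
  rw [sArea_eq_action reversed, sArea_eq_action hγ, action_comp_neg]
  simp only [action, areaLagrangian, Prod.snd_neg, mul_neg, intervalIntegral.integral_neg]

lemma exists_pos_le_degLen_of_exit (hF : Continuous F) (hF0 : ∀ x, 0 ≤ F x) {p : ℝ × ℝ}
    (hp : (fun x ↦ x - p) =O[𝓝 p] F) {U : Set (ℝ × ℝ)} (hU : U ∈ 𝓝 p) :
    ∃ δ > 0, ∀ a b γ, LocallyLipschitz γ → γ a = p → ∀ t ∈ Icc a b, γ t ∉ U →
      δ ≤ degLen F a b γ := by
  obtain ⟨f, K, hK, hf, hfp, hfU, fderiv_le⟩ := exists_bump_norm_fderiv_le hF0 hp hU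
  refine ⟨K⁻¹, inv_pos.2 hK, fun a b γ hγ hγa t ht hγt ↦ (inv_le_iff_one_le_mul₀' hK).2 ?_⟩
  have fderiv_le_lagrangian (x v : ℝ × ℝ) : |fderiv ℝ f x v| ≤ K * lengthLagrangian F x v := by
    calc |fderiv ℝ f x v| ≤ ‖fderiv ℝ f x‖ * ‖v‖ := (fderiv ℝ f x).le_opNorm v
      _ ≤ K * F x * enorm2 v :=
        mul_le_mul (fderiv_le x) (norm_le_enorm2 v) (norm_nonneg v)
          (mul_nonneg hK.le (hF0 x))
      _ = K * lengthLagrangian F x v := mul_assoc _ _ _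
  calc 1 = |f (γ t) - f (γ a)| := by simp [hfU _ hγt, hγa, hfp]
    _ = |action (fun x v ↦ fderiv ℝ f x v) a t γ| := by rw [action_fderiv hf hγ]
    _ ≤ K * degLen F a t γ := abs_action_le_mul (continuous_lengthLagrangian hF) hγ ht.1
        fun s _ ↦ fderiv_le_lagrangian (γ s)
    _ ≤ K * degLen F a b γ := by
        rw [← degLen_add_adjacent hF hγ a t b]
        gcongr
        exact le_add_of_nonneg_right (degLen_nonneg hF0 ht.2 γ)

lemma abs_sArea_le_of_loop (hF : Continuous F) (hγ : LocallyLipschitz γ) (hab : a ≤ b)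
    (hloop : γ b = γ a) {C : ℝ} (hC : ∀ t ∈ Icc a b, ‖γ t - γ a‖ ≤ C * F (γ t)) :
    |sArea a b γ| ≤ C * degLen F a b γ := by
  let exactForm (x v : ℝ × ℝ) : ℝ := fderiv ℝ (fun y : ℝ × ℝ ↦ (γ a).1 * y.2) x v
  have exactForm_apply (x v : ℝ × ℝ) : exactForm x v = (γ a).1 * v.2 := by
    simp [exactForm, fderiv_const_mul, fderiv_snd]
  have action_exactForm : action exactForm a b γ = 0 := by
    rw [action_fderiv (by fun_prop) hγ, hloop, sub_self]
  have continuous_exactForm : Continuous (Function.uncurry exactForm) := by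
    simp only [Function.uncurry_def, exactForm_apply]
    fun_prop
  have sArea_eq : sArea a b γ = action (fun x v ↦ areaLagrangian x v - exactForm x v) a b γ := by
    rw [action_sub continuous_areaLagrangian continuous_exactForm hγ, action_exactForm, sub_zero,
      sArea_eq_action hγ]
  rw [sArea_eq]
  refine abs_action_le_mul (continuous_lengthLagrangian hF) hγ hab fun t ht v ↦ ?_
  calc |areaLagrangian (γ t) v - exactForm (γ t) v| = |(γ t - γ a).1| * |v.2| := by
        rw [exactForm_apply, areaLagrangian, ← sub_mul, abs_mul, Prod.fst_sub]
    _ ≤ C * F (γ t) * enorm2 v :=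
        mul_le_mul ((norm_fst_le _).trans (hC t ht)) ((norm_snd_le v).trans (norm_le_enorm2 v))
          (abs_nonneg _) ((norm_nonneg _).trans (hC t ht))
    _ = C * lengthLagrangian F (γ t) v := mul_assoc _ _ _

end PlanarCurve

/-- The planar curves competing in the definition of `dCC F P Q`, independently of `F`. -/
structure IsCompetitor (P Q : ℝ × ℝ × ℝ) (a b : ℝ) (γ : ℝ → ℝ × ℝ) : Prop where
  isCurve : IsCurve a b γ (P.1, P.2.1) (Q.1, Q.2.1)
  sArea_eq : sArea a b γ = Q.2.2 - P.2.2

namespace IsCompetitor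

variable {P Q R : ℝ × ℝ × ℝ} {a b c d : ℝ} {γ η : ℝ → ℝ × ℝ}

lemma le (h : IsCompetitor P Q a b γ) : a ≤ b := h.isCurve.1

lemma locallyLipschitz (h : IsCompetitor P Q a b γ) : LocallyLipschitz γ := h.isCurve.2.1

lemma apply_left (h : IsCompetitor P Q a b γ) : γ a = (P.1, P.2.1) := h.isCurve.2.2.1

lemma apply_right (h : IsCompetitor P Q a b γ) : γ b = (Q.1, Q.2.1) := h.isCurve.2.2.2

lemma comp_neg (h : IsCompetitor P Q a b γ) :
    IsCompetitor Q P (-b) (-a) (fun t ↦ γ (-t)) where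
  isCurve := ⟨neg_le_neg h.le, h.locallyLipschitz.comp LipschitzWith.id.neg.locallyLipschitz,
    by simpa using h.apply_right, by simpa using h.apply_left⟩
  sArea_eq := by rw [sArea_comp_neg h.locallyLipschitz, h.sArea_eq, neg_sub]

lemma comp_add_const (h : IsCompetitor P Q (a + c) (b + c) γ) :
    IsCompetitor P Q a b (fun t ↦ γ (t + c)) where
  isCurve := ⟨by simpa using h.le,
    h.locallyLipschitz.comp (LocallyLipschitz.id.add (LocallyLipschitz.const c)),
    h.apply_left, h.apply_right⟩
  sArea_eq := by
    rw [← h.sArea_eq, sArea_eq_action h.locallyLipschitz, ← action_comp_add_const]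
    exact sArea_eq_action
      (h.locallyLipschitz.comp (LocallyLipschitz.id.add (LocallyLipschitz.const c))) a b

lemma piecewise_Iic (hγ : IsCompetitor P Q a b γ) (hη : IsCompetitor Q R b c η) :
    IsCompetitor P R a c ((Iic b).piecewise γ η) where
  isCurve := by
    have hb : γ b = η b := hγ.apply_right.trans hη.apply_left.symm
    refine ⟨hγ.le.trans hη.le,
      locallyLipschitz_piecewise_Iic hγ.locallyLipschitz hη.locallyLipschitz hb, ?_, ?_⟩
    · rw [piecewise_eq_of_mem _ _ _ (mem_Iic.2 hγ.le), hγ.apply_left]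
    · rcases hη.le.eq_or_lt with rfl | hbc
      · rw [piecewise_eq_of_mem _ _ _ self_mem_Iic, hb, hη.apply_right]
      · rw [piecewise_eq_of_notMem _ _ _ (notMem_Iic.2 hbc), hη.apply_right]
  sArea_eq := by
    have hb : γ b = η b := hγ.apply_right.trans hη.apply_left.symm
    rw [sArea_eq_action
        (locallyLipschitz_piecewise_Iic hγ.locallyLipschitz hη.locallyLipschitz hb),
      action_piecewise_Iic continuous_areaLagrangian hγ.locallyLipschitz hη.locallyLipschitz hb
        hγ.le hη.le,
      ← sArea_eq_action hγ.locallyLipschitz, ← sArea_eq_action hη.locallyLipschitz,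
      hγ.sArea_eq, hη.sArea_eq]
    ring

lemma exists_concat (hγ : IsCompetitor P Q a b γ) (hη : IsCompetitor Q R c d η) :
    ∃ e σ, IsCompetitor P R a e σ ∧
      ∀ F, Continuous F → degLen F a e σ = degLen F a b γ + degLen F c d η := by
  have translated : IsCompetitor Q R b (d - (c - b)) (fun t ↦ η (t + (c - b))) :=
    comp_add_const (by simpa using hη)
  refine ⟨_, _, hγ.piecewise_Iic translated, fun F hF ↦ ?_⟩
  have degLen_translated :
      degLen F b (d - (c - b)) (fun t ↦ η (t + (c - b))) = degLen F c d η := by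
    rw [degLen_eq_action, action_comp_add_const, add_sub_cancel, sub_add_cancel, degLen_eq_action]
  rw [← degLen_translated]
  exact action_piecewise_Iic (continuous_lengthLagrangian hF) hγ.locallyLipschitz
    translated.locallyLipschitz (hγ.apply_right.trans translated.apply_left.symm) hγ.le
    translated.le

end IsCompetitor

lemma isCompetitor_const (P : ℝ × ℝ × ℝ) : IsCompetitor P P 0 0 (fun _ ↦ (P.1, P.2.1)) where
  isCurve := ⟨le_rfl, LocallyLipschitz.const _, rfl, rfl⟩
  sArea_eq := by simp [sArea]

lemma isCompetitor_segment (P : ℝ × ℝ × ℝ) (q : ℝ × ℝ) :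
    IsCompetitor P (q.1, q.2, P.2.2 + sArea 0 1 (AffineMap.lineMap (P.1, P.2.1) q))
      0 1 (AffineMap.lineMap (P.1, P.2.1) q) where
  isCurve := ⟨zero_le_one, (lipschitzWith_lineMap _ _).locallyLipschitz, by simp, by simp⟩
  sArea_eq := by simp

open Real in
lemma isCompetitor_ellipse (P : ℝ × ℝ × ℝ) (h : ℝ) :
    IsCompetitor P (P.1, P.2.1, P.2.2 + h) 0 (2 * π)
      (fun t ↦ (P.1 + h / π * (cos t - 1), P.2.1 + sin t)) where
  isCurve := by
    refine ⟨two_pi_pos.le, ContDiff.locallyLipschitz (𝕂 := ℝ) ?_, by simp, by simp⟩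
    fun_prop
  sArea_eq := by
    have integrand (t : ℝ) : (P.1 + h / π * (cos t - 1)) * deriv (fun s ↦ P.2.1 + sin s) t =
        (P.1 - h / π) * cos t + h / π * cos t ^ 2 := by
      simp only [deriv_const_add, Real.deriv_sin]
      ring
    simp only [sArea, integrand, add_sub_cancel_left]
    rw [intervalIntegral.integral_add (Continuous.intervalIntegrable (by fun_prop) _ _)
      (Continuous.intervalIntegrable (by fun_prop) _ _)]
    simp only [intervalIntegral.integral_const_mul, integral_cos, integral_cos_sq, sin_two_pi,
      cos_two_pi, sin_zero, cos_zero]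
    field_simp
    ring

lemma exists_isCompetitor (P Q : ℝ × ℝ × ℝ) : ∃ a b γ, IsCompetitor P Q a b γ := by
  have segment := isCompetitor_segment P (Q.1, Q.2.1)
  set z := P.2.2 + sArea 0 1 (AffineMap.lineMap (P.1, P.2.1) (Q.1, Q.2.1))
  have ellipse := isCompetitor_ellipse (Q.1, Q.2.1, z) (Q.2.2 - z)
  rw [add_sub_cancel] at ellipse
  obtain ⟨b, γ, hγ, -⟩ := segment.exists_concat ellipse
  exact ⟨0, b, γ, hγ⟩

section Metric

variable {F : ℝ × ℝ → ℝ} {P Q : ℝ × ℝ × ℝ}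

lemma dCC_nonneg (hF0 : ∀ x, 0 ≤ F x) (P Q : ℝ × ℝ × ℝ) : 0 ≤ dCC F P Q := by
  refine Real.sInf_nonneg ?_
  rintro x ⟨a, b, γ, hγ, -, rfl⟩
  exact degLen_nonneg hF0 hγ.1 γ

lemma dCC_le_degLen (hF0 : ∀ x, 0 ≤ F x) {a b : ℝ} {γ : ℝ → ℝ × ℝ} (hγ : IsCompetitor P Q a b γ) :
    dCC F P Q ≤ degLen F a b γ := by
  refine csInf_le ⟨0, ?_⟩ ⟨a, b, γ, hγ.isCurve, hγ.sArea_eq, rfl⟩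
  rintro x ⟨a, b, γ, hγ, -, rfl⟩
  exact degLen_nonneg hF0 hγ.1 γ

lemma le_dCC {ℓ : ℝ} (h : ∀ a b γ, IsCompetitor P Q a b γ → ℓ ≤ degLen F a b γ) :
    ℓ ≤ dCC F P Q := by
  obtain ⟨a, b, γ, hγ⟩ := exists_isCompetitor P Q
  refine le_csInf ⟨_, a, b, γ, hγ.isCurve, hγ.sArea_eq, rfl⟩ ?_
  rintro x ⟨a, b, γ, isCurve, sArea_eq, rfl⟩
  exact h a b γ ⟨isCurve, sArea_eq⟩

lemma dCC_self (hF0 : ∀ x, 0 ≤ F x) (P : ℝ × ℝ × ℝ) : dCC F P P = 0 :=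
  (dCC_nonneg hF0 P P).antisymm' <| by
    simpa [degLen] using dCC_le_degLen hF0 (isCompetitor_const P)

lemma dCC_le_dCC_swap (hF0 : ∀ x, 0 ≤ F x) (P Q : ℝ × ℝ × ℝ) : dCC F P Q ≤ dCC F Q P :=
  le_dCC fun a b γ hγ ↦ degLen_comp_neg F a b γ ▸ dCC_le_degLen hF0 hγ.comp_neg

lemma dCC_comm (hF0 : ∀ x, 0 ≤ F x) (P Q : ℝ × ℝ × ℝ) : dCC F P Q = dCC F Q P :=
  (dCC_le_dCC_swap hF0 P Q).antisymm (dCC_le_dCC_swap hF0 Q P)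

lemma dCC_triangle (hF : Continuous F) (hF0 : ∀ x, 0 ≤ F x) (P Q R : ℝ × ℝ × ℝ) :
    dCC F P R ≤ dCC F P Q + dCC F Q R := by
  rw [← sub_le_iff_le_add]
  refine le_dCC fun a b γ hγ ↦ ?_
  rw [sub_le_comm]
  refine le_dCC fun c d η hη ↦ ?_
  obtain ⟨e, σ, hσ, degLen_σ⟩ := hγ.exists_concat hη
  rw [sub_le_iff_le_add', ← degLen_σ F hF]
  exact dCC_le_degLen hF0 hσ

lemma dCC_pos_of_proj_ne (hF : Continuous F) (hF0 : ∀ x, 0 ≤ F x)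
    (hP : (fun x ↦ x - (P.1, P.2.1)) =O[𝓝 (P.1, P.2.1)] F) (hPQ : (P.1, P.2.1) ≠ (Q.1, Q.2.1)) :
    0 < dCC F P Q := by
  obtain ⟨δ, hδ, le_of_exit⟩ := exists_pos_le_degLen_of_exit hF hF0 hP
    (isOpen_compl_singleton.mem_nhds hPQ)
  exact hδ.trans_le <| le_dCC fun a b γ hγ ↦ le_of_exit a b γ hγ.locallyLipschitz hγ.apply_left b
    (right_mem_Icc.2 hγ.le) (by simp [hγ.apply_right])

lemma dCC_pos_of_proj_eq (hF : Continuous F) (hF0 : ∀ x, 0 ≤ F x)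
    (hP : (fun x ↦ x - (P.1, P.2.1)) =O[𝓝 (P.1, P.2.1)] F) (hproj : (P.1, P.2.1) = (Q.1, Q.2.1))
    (hPQ : P.2.2 ≠ Q.2.2) : 0 < dCC F P Q := by
  obtain ⟨C, hC, hPC⟩ := hP.exists_pos
  obtain ⟨δ, hδ, le_of_exit⟩ := exists_pos_le_degLen_of_exit hF hF0 hP hPC.bound
  have area_pos : 0 < |Q.2.2 - P.2.2| := abs_pos.2 (sub_ne_zero.2 hPQ.symm)
  suffices min δ (|Q.2.2 - P.2.2| / C) ≤ dCC F P Q from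
    (lt_min hδ (div_pos area_pos hC)).trans_le this
  refine le_dCC fun a b γ hγ ↦ min_le_iff.2 ?_
  by_cases exit : ∃ t ∈ Icc a b, ¬‖γ t - (P.1, P.2.1)‖ ≤ C * ‖F (γ t)‖
  · obtain ⟨t, ht, hγt⟩ := exit
    exact .inl (le_of_exit a b γ hγ.locallyLipschitz hγ.apply_left t ht hγt)
  · push Not at exit
    have loop : γ b = γ a := by rw [hγ.apply_left, hγ.apply_right, hproj]
    rw [← hγ.sArea_eq, div_le_iff₀' hC]
    refine .inr (abs_sArea_le_of_loop hF hγ.locallyLipschitz hγ.le loop fun t ht ↦ ?_)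
    simpa [hγ.apply_left, abs_of_nonneg (hF0 _)] using exit t ht

lemma dCC_eq_zero_iff (hF : Continuous F) (hF0 : ∀ x, 0 ≤ F x)
    (growth : ∀ p, (fun x ↦ x - p) =O[𝓝 p] F) (P Q : ℝ × ℝ × ℝ) : dCC F P Q = 0 ↔ P = Q := by
  refine ⟨fun h ↦ ?_, fun h ↦ h ▸ dCC_self hF0 P⟩
  have proj_eq : (P.1, P.2.1) = (Q.1, Q.2.1) := by
    by_contra hne
    exact (dCC_pos_of_proj_ne hF hF0 (growth _) hne).ne' h
  have height_eq : P.2.2 = Q.2.2 := by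
    by_contra hne
    exact (dCC_pos_of_proj_eq hF hF0 (growth _) proj_eq hne).ne' h
  obtain ⟨fst_eq, snd_eq⟩ := Prod.mk.inj proj_eq
  exact Prod.ext fst_eq (Prod.ext snd_eq height_eq)

end Metric

section Length

variable {F : ℝ × ℝ → ℝ} {Γ : ℝ → ℝ × ℝ × ℝ} {γ : ℝ → ℝ × ℝ} {P Q : ℝ × ℝ × ℝ} {a b : ℝ}

lemma locallyLipschitz_projCurve (hΓ : LocallyLipschitz Γ) : LocallyLipschitz (projCurve Γ) :=
  (LipschitzWith.prod_fst.prodMk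
    (LipschitzWith.prod_fst.comp LipschitzWith.prod_snd)).locallyLipschitz.comp hΓ

lemma isCompetitor_projCurve (hΓ : LocallyLipschitz Γ) (hab : a ≤ b) (adm : Admissible a b Γ) :
    IsCompetitor (Γ a) (Γ b) a b (projCurve Γ) where
  isCurve := ⟨hab, locallyLipschitz_projCurve hΓ, rfl, rfl⟩
  sArea_eq := by
    have height : LocallyLipschitz fun t ↦ (Γ t).2.2 :=
      (LipschitzWith.prod_snd.comp LipschitzWith.prod_snd).locallyLipschitz.comp hΓ
    rw [← integral_deriv_eq_sub_of_locallyLipschitz height]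
    refine intervalIntegral.integral_congr_ae ?_
    filter_upwards [adm, Measure.ae_ne volume b] with t ht htb hmem
    rw [uIoc_of_le hab] at hmem
    exact (ht ⟨hmem.1, hmem.2.lt_of_ne htb⟩).symm

lemma fin_sum_succ_sub_castSucc {G : Type*} [AddCommGroup G] {n : ℕ} (u : Fin (n + 1) → G) :
    ∑ i : Fin n, (u i.succ - u i.castSucc) = u (Fin.last n) - u 0 := by
  rw [Finset.sum_sub_distrib, sub_eq_sub_iff_add_eq_add, add_comm, ← Fin.sum_univ_succ,
    Fin.sum_univ_castSucc, add_comm]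

lemma sum_dCC_le_degLen_projCurve (hF : Continuous F) (hF0 : ∀ x, 0 ≤ F x)
    (hΓ : LocallyLipschitz Γ) {n : ℕ} {t : Fin (n + 1) → ℝ} (ht : Monotone t)
    (adm : Admissible (t 0) (t (Fin.last n)) Γ) :
    ∑ i : Fin n, dCC F (Γ (t i.castSucc)) (Γ (t i.succ)) ≤
      degLen F (t 0) (t (Fin.last n)) (projCurve Γ) := by
  let arcLength (s : ℝ) : ℝ := degLen F (t 0) s (projCurve Γ)
  have dCC_le (i : Fin n) : dCC F (Γ (t i.castSucc)) (Γ (t i.succ)) ≤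
      arcLength (t i.succ) - arcLength (t i.castSucc) := by
    have adm_i : Admissible (t i.castSucc) (t i.succ) Γ := adm.mono fun s hs hmem ↦
      hs (Ioo_subset_Ioo (ht (Fin.zero_le _)) (ht (Fin.le_last _)) hmem)
    have arcLength_add : arcLength (t i.castSucc) + degLen F (t i.castSucc) (t i.succ) (projCurve Γ)
        = arcLength (t i.succ) := degLen_add_adjacent hF (locallyLipschitz_projCurve hΓ) _ _ _
    rw [← arcLength_add, add_sub_cancel_left]
    exact dCC_le_degLen hF0 (isCompetitor_projCurve hΓ (ht i.castSucc_lt_succ.le) adm_i)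
  calc ∑ i : Fin n, dCC F (Γ (t i.castSucc)) (Γ (t i.succ))
      ≤ ∑ i : Fin n, (arcLength (t i.succ) - arcLength (t i.castSucc)) :=
        Finset.sum_le_sum fun i _ ↦ dCC_le i
    _ = arcLength (t (Fin.last n)) - arcLength (t 0) :=
        fin_sum_succ_sub_castSucc fun i ↦ arcLength (t i)
    _ = degLen F (t 0) (t (Fin.last n)) (projCurve Γ) := by simp [arcLength, degLen]

lemma pathLen_le_degLen_projCurve (hF : Continuous F) (hF0 : ∀ x, 0 ≤ F x) (hab : a ≤ b)
    (hΓ : LocallyLipschitz Γ) (adm : Admissible a b Γ) :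
    pathLen F a b Γ ≤ degLen F a b (projCurve Γ) := by
  refine Real.sSup_le ?_ (degLen_nonneg hF0 hab _)
  rintro x ⟨n, t, ht, rfl, rfl, rfl⟩
  exact sum_dCC_le_degLen_projCurve hF hF0 hΓ ht adm

lemma dCC_le_pathLen (hF : Continuous F) (hF0 : ∀ x, 0 ≤ F x) (hab : a ≤ b)
    (hΓ : LocallyLipschitz Γ) (adm : Admissible a b Γ) : dCC F (Γ a) (Γ b) ≤ pathLen F a b Γ := by
  refine le_csSup ⟨degLen F a b (projCurve Γ), ?_⟩
    ⟨1, ![a, b], Fin.monotone_iff_le_succ.2 (by simpa using hab), rfl, rfl, by simp⟩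
  rintro x ⟨n, t, ht, rfl, rfl, rfl⟩
  exact sum_dCC_le_degLen_projCurve hF hF0 hΓ ht adm

/-- The admissible curve over the planar curve `γ` with height `z` at time `a`. -/
def liftCurve (a z : ℝ) (γ : ℝ → ℝ × ℝ) (t : ℝ) : ℝ × ℝ × ℝ :=
  ((γ t).1, (γ t).2, z + sArea a t γ)

lemma projCurve_liftCurve (a z : ℝ) (γ : ℝ → ℝ × ℝ) : projCurve (liftCurve a z γ) = γ := rfl

lemma locallyLipschitz_liftCurve (hγ : LocallyLipschitz γ) (a z : ℝ) :
    LocallyLipschitz (liftCurve a z γ) := by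
  have height : LocallyLipschitz fun t ↦ z + sArea a t γ := by
    simp only [sArea_eq_action hγ]
    exact (LocallyLipschitz.const z).add
      (locallyLipschitz_action continuous_areaLagrangian hγ a)
  exact (LipschitzWith.prod_fst.locallyLipschitz.comp hγ).prodMk
    ((LipschitzWith.prod_snd.locallyLipschitz.comp hγ).prodMk height)

lemma admissible_liftCurve (hγ : LocallyLipschitz γ) (a b z : ℝ) :
    Admissible a b (liftCurve a z γ) := by
  have locallyIntegrable :
      LocallyIntegrable fun t ↦ areaLagrangian (γ t) (deriv γ t) := fun t ↦
    ⟨Ioc (t - 1) (t + 1), Ioc_mem_nhds (by simp) (by simp),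
      (intervalIntegrable_lagrangian continuous_areaLagrangian hγ (t - 1) (t + 1)).1⟩
  filter_upwards [LocallyIntegrable.ae_hasDerivAt_integral locallyIntegrable, ae_deriv_snd hγ]
    with t hasDerivAt_action deriv_snd _
  simp only [liftCurve, sArea_eq_action hγ, deriv_snd]
  exact ((hasDerivAt_action a).const_add z).deriv

namespace IsCompetitor

lemma liftCurve_left (hγ : IsCompetitor P Q a b γ) : liftCurve a P.2.2 γ a = P := by
  simp [liftCurve, hγ.apply_left, sArea]

lemma liftCurve_right (hγ : IsCompetitor P Q a b γ) : liftCurve a P.2.2 γ b = Q := by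
  simp [liftCurve, hγ.apply_right, hγ.sArea_eq]

end IsCompetitor

theorem dCC_eq_sInf_pathLen (hF : Continuous F) (hF0 : ∀ x, 0 ≤ F x) (P Q : ℝ × ℝ × ℝ) :
    dCC F P Q = sInf { x | ∃ a b Γ, a ≤ b ∧ LocallyLipschitz Γ ∧ Admissible a b Γ ∧
      Γ a = P ∧ Γ b = Q ∧ pathLen F a b Γ = x } := by
  set lengths := { x | ∃ a b Γ, a ≤ b ∧ LocallyLipschitz Γ ∧ Admissible a b Γ ∧
    Γ a = P ∧ Γ b = Q ∧ pathLen F a b Γ = x }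
  have dCC_mem_lowerBounds : dCC F P Q ∈ lowerBounds lengths := by
    rintro x ⟨a, b, Γ, hab, hΓ, adm, rfl, rfl, rfl⟩
    exact dCC_le_pathLen hF hF0 hab hΓ adm
  have lift_mem {a b : ℝ} {γ : ℝ → ℝ × ℝ} (hγ : IsCompetitor P Q a b γ) :
      pathLen F a b (liftCurve a P.2.2 γ) ∈ lengths :=
    ⟨a, b, liftCurve a P.2.2 γ, hγ.le, locallyLipschitz_liftCurve hγ.locallyLipschitz _ _,
      admissible_liftCurve hγ.locallyLipschitz _ _ _, hγ.liftCurve_left, hγ.liftCurve_right, rfl⟩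
  obtain ⟨a, b, γ, hγ⟩ := exists_isCompetitor P Q
  refine (le_csInf ⟨_, lift_mem hγ⟩ dCC_mem_lowerBounds).antisymm (le_dCC fun a b γ hγ ↦ ?_)
  calc sInf lengths ≤ pathLen F a b (liftCurve a P.2.2 γ) :=
        csInf_le ⟨_, dCC_mem_lowerBounds⟩ (lift_mem hγ)
    _ ≤ degLen F a b (projCurve (liftCurve a P.2.2 γ)) :=
        pathLen_le_degLen_projCurve hF hF0 hγ.le
          (locallyLipschitz_liftCurve hγ.locallyLipschitz _ _)
          (admissible_liftCurve hγ.locallyLipschitz _ _ _)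
    _ = degLen F a b γ := by rw [projCurve_liftCurve]

end Length

namespace TwoWell

variable {W : ℝ × ℝ → ℝ} {pm pp : ℝ × ℝ}

lemma continuous_sqrt (hW : TwoWell W pm pp) : Continuous fun x ↦ √(W x) :=
  hW.smooth.continuous.sqrt

lemma hessian_pos (hW : TwoWell W pm pp) {p : ℝ × ℝ} (hp : W p = 0) {v : ℝ × ℝ} (hv : v ≠ 0) :
    0 < iteratedFDeriv ℝ 2 W p ![v, v] := by
  rcases (hW.zeroSet p).1 hp with rfl | rfl
  · exact hW.hess_m v hv
  · exact hW.hess_p v hv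

lemma sub_isBigO_sqrt_of_eq_zero (hW : TwoWell W pm pp) {p : ℝ × ℝ} (hp : W p = 0) :
    (fun x ↦ x - p) =O[𝓝 p] fun x ↦ √(W x) := by
  have isLocalMin : IsLocalMin W p := .of_forall fun x ↦ hp ▸ hW.nonneg x
  have sq_isBigO : (fun x ↦ ‖x - p‖ ^ 2) =O[𝓝 p] fun x ↦ √(W x) ^ 2 := by
    simpa [hp, Real.sq_sqrt (hW.nonneg _)] using sq_norm_isBigO_of_hessian_pos
      (contDiff_infty.1 hW.smooth 2) isLocalMin.fderiv_eq_zero fun v ↦ hW.hessian_pos hp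
  exact (sq_isBigO.of_pow two_ne_zero).of_norm_left

lemma sub_isBigO_sqrt (hW : TwoWell W pm pp) (p : ℝ × ℝ) :
    (fun x ↦ x - p) =O[𝓝 p] fun x ↦ √(W x) := by
  by_cases hp : W p = 0
  · exact hW.sub_isBigO_sqrt_of_eq_zero hp
  have sqrt_ne_zero : √(W p) ≠ 0 := mt (Real.sqrt_eq_zero (hW.nonneg p)).1 hp
  have sub_isBigO_const : (fun x ↦ x - p) =O[𝓝 p] fun _ ↦ √(W p) :=
    isBigO_const_of_tendsto ((continuous_id.sub continuous_const).tendsto p) sqrt_ne_zero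
  have sqrt_isEquivalent : (fun x ↦ √(W x)) ~[𝓝 p] fun _ ↦ √(W p) :=
    (isEquivalent_const_iff_tendsto sqrt_ne_zero).2 (hW.continuous_sqrt.tendsto p)
  exact sub_isBigO_const.trans sqrt_isEquivalent.isBigO_symm

end TwoWell

theorem dCC_metric_and_length_metric_general {F : ℝ × ℝ → ℝ} (hF : Continuous F)
    (hF0 : ∀ x, 0 ≤ F x) (growth : ∀ p, (fun x ↦ x - p) =O[𝓝 p] F) :
    (∀ P Q : ℝ × ℝ × ℝ, 0 ≤ dCC F P Q) ∧
    (∀ P Q : ℝ × ℝ × ℝ, dCC F P Q = dCC F Q P) ∧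
    (∀ P Q R : ℝ × ℝ × ℝ, dCC F P R ≤ dCC F P Q + dCC F Q R) ∧
    (∀ P Q : ℝ × ℝ × ℝ, dCC F P Q = 0 ↔ P = Q) ∧
    (∀ P Q : ℝ × ℝ × ℝ, dCC F P Q =
      sInf { x | ∃ a b Γ, a ≤ b ∧ LocallyLipschitz Γ ∧ Admissible a b Γ ∧
        Γ a = P ∧ Γ b = Q ∧ pathLen F a b Γ = x }) :=
  ⟨dCC_nonneg hF0, dCC_comm hF0, dCC_triangle hF hF0, dCC_eq_zero_iff hF hF0 growth,
    dCC_eq_sInf_pathLen hF hF0⟩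

/-- `d_F` is a metric on `ℝ³` (nonnegative, symmetric, triangle inequality,
vanishing exactly on the diagonal; in particular positive between distinct points over the same
well), and it is a length metric: `d_F(P,Q)` is the infimum of `L(Γ)` over admissible locally
Lipschitz curves joining `P` to `Q`. -/
theorem dCC_metric_and_length_metric
    (W : ℝ × ℝ → ℝ) (pm pp : ℝ × ℝ) (hW : TwoWell W pm pp)
    (F : ℝ × ℝ → ℝ) (hF : F = fun p => Real.sqrt (W p)) :
    (∀ P Q : ℝ × ℝ × ℝ, 0 ≤ dCC F P Q) ∧
    (∀ P Q : ℝ × ℝ × ℝ, dCC F P Q = dCC F Q P) ∧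
    (∀ P Q R : ℝ × ℝ × ℝ, dCC F P R ≤ dCC F P Q + dCC F Q R) ∧
    (∀ P Q : ℝ × ℝ × ℝ, dCC F P Q = 0 ↔ P = Q) ∧
    (∀ P Q : ℝ × ℝ × ℝ, P ≠ Q →
      (((P.1, P.2.1) = pm ∧ (Q.1, Q.2.1) = pm) ∨ ((P.1, P.2.1) = pp ∧ (Q.1, Q.2.1) = pp)) →
      0 < dCC F P Q) ∧
    (∀ P Q : ℝ × ℝ × ℝ, dCC F P Q =
      sInf { x | ∃ a b Γ, a ≤ b ∧ LocallyLipschitz Γ ∧ Admissible a b Γ ∧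
        Γ a = P ∧ Γ b = Q ∧ pathLen F a b Γ = x }) := by
  subst hF
  obtain ⟨nonneg, symm, triangle, zero_iff, length_eq⟩ := dCC_metric_and_length_metric_general
    hW.continuous_sqrt (fun x ↦ Real.sqrt_nonneg (W x)) hW.sub_isBigO_sqrt
  exact ⟨nonneg, symm, triangle, zero_iff,
    fun P Q hPQ _ ↦ (nonneg P Q).lt_of_ne' (mt (zero_iff P Q).1 hPQ), length_eq⟩
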